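/- arXiv:1604.00888 — 2 statements merged into one kernel-verified Lean document; each statement's English description precedes it below -/
import Mathlib

section
/- Let G be a finite simple graph, let u and v be distinct vertices of G, and let S be a set of vertices with u ∉ S, v ∉ S, and |S| < δ(G) + 2 − α̃(G). Then there is a path in G from u to v avoiding all vertices of S. (Equivalently, the vertex connectivity of G satisfies κ(G) ≥ δ(G) + 2 − α̃(G).) -/
def SimpleGraph.HasBipartiteHole {V : Type*} (G : SimpleGraph V) (s t : ℕ) : Prop :=
  ∃ S T : Finset V, Disjoint S T ∧ S.card = s ∧ T.card = t ∧
    ∀ a ∈ S, ∀ b ∈ T, ¬ G.Adj a b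

noncomputable def SimpleGraph.biHoleNumber {V : Type*} (G : SimpleGraph V) : ℕ :=
  sInf {r : ℕ | ∃ s t : ℕ, 0 < s ∧ 0 < t ∧ r = s + t - 1 ∧ ¬ G.HasBipartiteHole s t}

/-!
Choose positive `s`, `t` with `α̃(G) = s + t - 1` such that `G` has no `(s, t)`-bipartite-hole.
The bound on `S` leaves at least `s` vertices of the closed neighbourhood of `u` and at least `t`
vertices of the closed neighbourhood of `v` outside `S`. As these two sets do not contain a hole,
they meet or are joined by an edge, so `u` and `v` are connected outside `S` by a path of length
at most three.
-/

open Finset SimpleGraph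

section

variable {V : Type*} {G : SimpleGraph V} {s t : ℕ}

lemma hasBipartiteHole_of_le_card {A B : Finset V} (hAB : Disjoint A B) (hs : s ≤ #A)
    (ht : t ≤ #B) (hadj : ∀ a ∈ A, ∀ b ∈ B, ¬ G.Adj a b) : G.HasBipartiteHole s t := by
  obtain ⟨A', hA', rfl⟩ := exists_subset_card_eq hs
  obtain ⟨B', hB', rfl⟩ := exists_subset_card_eq ht
  exact ⟨A', B', hAB.mono hA' hB', rfl, rfl, fun a ha b hb ↦ hadj a (hA' ha) b (hB' hb)⟩

lemma exists_eq_or_adj_of_not_hasBipartiteHole {A B : Finset V} (h : ¬ G.HasBipartiteHole s t)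
    (hs : s ≤ #A) (ht : t ≤ #B) : ∃ a ∈ A, ∃ b ∈ B, a = b ∨ G.Adj a b := by
  by_contra! hne
  have hAB : Disjoint A B := disjoint_left.2 fun a ha hb ↦ (hne a ha a hb).1 rfl
  exact h (hasBipartiteHole_of_le_card hAB hs ht fun a ha b hb ↦ (hne a ha b hb).2)

lemma not_hasBipartiteHole_of_card_lt_add [Fintype V] (h : Fintype.card V < s + t) :
    ¬ G.HasBipartiteHole s t := by
  classical
  rintro ⟨A, B, hAB, rfl, rfl, -⟩
  rw [← card_union_of_disjoint hAB] at h
  exact h.not_ge (card_le_univ _)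

/-- An infinite graph with bipartite holes of all sizes has `biHoleNumber` equal to the junk value
`sInf ∅ = 0`. -/
lemma exists_biHoleNumber_eq_and_not_hasBipartiteHole (hG : ∃ s t, ¬ G.HasBipartiteHole s t) :
    ∃ s t, 0 < s ∧ 0 < t ∧ G.biHoleNumber = s + t - 1 ∧ ¬ G.HasBipartiteHole s t := by
  obtain ⟨s, t, h⟩ := hG
  have hsucc : ¬ G.HasBipartiteHole (s + 1) (t + 1) := by
    rintro ⟨A, B, hAB, hA, hB, hadj⟩
    exact h (hasBipartiteHole_of_le_card hAB (by lia) (by lia) hadj)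
  exact Nat.sInf_mem (s := {r | ∃ s t, 0 < s ∧ 0 < t ∧ r = s + t - 1 ∧ ¬ G.HasBipartiteHole s t})
    ⟨_, s + 1, t + 1, s.succ_pos, t.succ_pos, rfl, hsucc⟩

lemma exists_walk_length_le_one_avoiding {v w : V} {S : Finset V} (hv : v ∉ S) (hw : w ∉ S)
    (h : v = w ∨ G.Adj v w) : ∃ p : G.Walk v w, p.length ≤ 1 ∧ ∀ x ∈ p.support, x ∉ S := by
  obtain rfl | h := h
  · exact ⟨.nil, by simp [hv]⟩
  · exact ⟨h.toWalk, by simp [hv, hw]⟩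

lemma degree_add_one_le_card_insert_neighborFinset_sdiff_add_card [DecidableEq V] (v : V)
    [Fintype (G.neighborSet v)] (S : Finset V) :
    G.degree v + 1 ≤ #(insert v (G.neighborFinset v) \ S) + #S := by
  rw [← card_neighborFinset_eq_degree, ← card_insert_of_notMem (G.notMem_neighborFinset_self v)]
  exact card_le_card_sdiff_add_card

theorem exists_isPath_length_le_three_of_not_hasBipartiteHole {u v : V}
    [Fintype (G.neighborSet u)] [Fintype (G.neighborSet v)] {S : Finset V} (hu : u ∉ S)
    (hv : v ∉ S) (h : ¬ G.HasBipartiteHole s t) (hs : #S + s ≤ G.degree u + 1)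
    (ht : #S + t ≤ G.degree v + 1) :
    ∃ p : G.Walk u v, p.IsPath ∧ p.length ≤ 3 ∧ ∀ w ∈ p.support, w ∉ S := by
  classical
  have hA := degree_add_one_le_card_insert_neighborFinset_sdiff_add_card (G := G) u S
  have hB := degree_add_one_le_card_insert_neighborFinset_sdiff_add_card (G := G) v S
  obtain ⟨a, ha, b, hb, hab⟩ := exists_eq_or_adj_of_not_hasBipartiteHole h
    (A := insert u (G.neighborFinset u) \ S) (B := insert v (G.neighborFinset v) \ S)
    (by lia) (by lia)
  simp only [mem_sdiff, mem_insert, mem_neighborFinset] at ha hb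
  obtain ⟨hua, haS⟩ := ha
  obtain ⟨hvb, hbS⟩ := hb
  obtain ⟨p, hp, hpS⟩ := exists_walk_length_le_one_avoiding hu haS (hua.imp_left Eq.symm)
  obtain ⟨q, hq, hqS⟩ := exists_walk_length_le_one_avoiding haS hbS hab
  obtain ⟨r, hr, hrS⟩ := exists_walk_length_le_one_avoiding hbS hv (hvb.imp_right Adj.symm)
  let walk := p.append (q.append r)
  have hlength : walk.length ≤ 3 := by
    simp only [walk, Walk.length_append]
    lia
  have havoid : ∀ w ∈ walk.support, w ∉ S := by
    simp only [walk, Walk.mem_support_append_iff]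
    rintro w (hw | hw | hw)
    exacts [hpS w hw, hqS w hw, hrS w hw]
  exact ⟨walk.bypass, walk.bypass_isPath, walk.length_bypass_le_length.trans hlength,
    fun w hw ↦ havoid w (walk.support_bypass_subset_support hw)⟩

end

theorem connectivity_ge_minDegree_add_two_sub_biHoleNumber_general
    {V : Type*} {G : SimpleGraph V} (hG : ∃ s t, ¬ G.HasBipartiteHole s t) {u v : V}
    [Fintype (G.neighborSet u)] [Fintype (G.neighborSet v)] {S : Finset V} (hu : u ∉ S)
    (hv : v ∉ S) (hS : (#S : ℤ) < min (G.degree u : ℤ) (G.degree v) + 2 - G.biHoleNumber) :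
    ∃ p : G.Walk u v, p.IsPath ∧ p.length ≤ 3 ∧ ∀ w ∈ p.support, w ∉ S := by
  obtain ⟨s, t, hs, ht, hst, hole⟩ := exists_biHoleNumber_eq_and_not_hasBipartiteHole hG
  exact exists_isPath_length_le_three_of_not_hasBipartiteHole hu hv hole (by lia) (by lia)

theorem connectivity_ge_minDegree_add_two_sub_biHoleNumber
    {V : Type*} [Fintype V] [DecidableEq V] (G : SimpleGraph V) [DecidableRel G.Adj]
    (u v : V) (huv : u ≠ v) (S : Finset V) (hu : u ∉ S) (hv : v ∉ S)
    (hS : (S.card : ℤ) < (G.minDegree : ℤ) + 2 - (G.biHoleNumber : ℤ)) :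
    ∃ p : G.Walk u v, p.IsPath ∧ ∀ w ∈ p.support, w ∉ S := by
  have hG : ¬ G.HasBipartiteHole (Fintype.card V) 1 :=
    not_hasBipartiteHole_of_card_lt_add (Nat.lt_succ_self _)
  have hu_degree := G.minDegree_le_degree u
  have hv_degree := G.minDegree_le_degree v
  obtain ⟨p, hp, -, hpS⟩ := connectivity_ge_minDegree_add_two_sub_biHoleNumber_general
    ⟨_, _, hG⟩ hu hv (by lia)
  exact ⟨p, hp, hpS⟩
end

section
/- Let v₁, v₂, …, v_n (n ≥ 3) be a path in a simple graph G, i.e. the vertices are pairwise distinct and v_i is adjacent to v_{i+1} for 1 ≤ i < n. Suppose there exist indices i and j with 1 ≤ j < i ≤ n − 1 such that v_i is adjacent to v₁, v_j is adjacent to v_n, and v_{i+1} is adjacent to v_{j+1}. Then G contains a cycle whose vertex set is exactly {v₁, …, v_n}; in particular the induced subgraph of G on {v₁, …, v_n} is Hamiltonian. -/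
/-!
Removing the edges `v j — v (j + 1)` and `v i — v (i + 1)` splits the path into three segments
`P = v 0 … v j`, `Q = v (j + 1) … v i` and `R = v (i + 1) … v (n - 1)`. The three additional
edges join the segments cyclically in the order `P`, reversed `R`, `Q`.
-/

section

open SimpleGraph

variable {V : Type*} {G : SimpleGraph V}

theorem exists_walk_support_eq_map_Ico {v : ℕ → V} {a b : ℕ} (hab : a ≤ b)
    (hadj : ∀ k, a ≤ k → k < b → G.Adj (v k) (v (k + 1))) :
    ∃ p : G.Walk (v a) (v b), p.support = (List.Ico a (b + 1)).map v := by
  induction b, hab using Nat.le_induction with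
  | base => exact ⟨.nil, by simp⟩
  | succ b hab ih =>
    obtain ⟨p, hp⟩ := ih fun k hak hkb ↦ hadj k hak (by omega)
    refine ⟨p.concat (hadj b hab (by omega)), ?_⟩
    rw [Walk.support_concat, hp, List.Ico.succ_top (show a ≤ b + 1 by omega),
      List.map_append, List.map_singleton]

theorem isCycle_cons_of_isPath {a b : V} {p : G.Walk a b} (hp : p.IsPath) (hlen : 2 ≤ p.length)
    (h : G.Adj b a) : (p.cons h).IsCycle :=
  Walk.isCycle_iff_isPath_tail_and_le_length.mpr ⟨by simpa using hp, by simpa⟩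

theorem exists_isCycle_of_nodup_support_append {a a' b b' c c' : V}
    (p : G.Walk a a') (q : G.Walk b b') (r : G.Walk c c')
    (hnodup : (p.support ++ q.support ++ r.support).Nodup)
    (hpr : G.Adj a' c') (hrq : G.Adj c b) (hqp : G.Adj b' a) :
    ∃ C : G.Walk b' b', C.IsCycle ∧
      ∀ x, x ∈ C.support ↔ x ∈ p.support ++ q.support ++ r.support := by
  let w : G.Walk a b' := p.append (.cons hpr (r.reverse.append (.cons hrq q)))
  have hperm : w.support.Perm (p.support ++ q.support ++ r.support) := by
    have hw : w.support = p.support ++ (r.support.reverse ++ q.support) := by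
      simp [w, Walk.support_append]
    rw [hw, List.append_assoc]
    exact (((List.reverse_perm _).append_right _).trans List.perm_append_comm).append_left _
  have hpath : w.IsPath := .mk' (hperm.nodup_iff.mpr hnodup)
  have hlen : 2 ≤ w.length := by
    simp only [w, Walk.length_append, Walk.length_cons]
    omega
  refine ⟨.cons hqp w, isCycle_cons_of_isPath hpath hlen hqp, fun x ↦ ?_⟩
  rw [Walk.support_cons, List.mem_cons, ← hperm.mem_iff]
  exact or_iff_right_of_imp fun hx ↦ hx ▸ w.end_mem_support

end

/-- Situation (c): a double cross flip closes a maximal path into a spanning cycle.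
Vertices `v 0, v 1, …, v (n-1)` (1-based `v₁, …, v_n` in the paper) form a path;
indices `i, j` here correspond to the paper's `1 ≤ j < i ≤ n - 1` shifted down by one,
so `0 ≤ j < i ≤ n - 2`. -/
theorem cycle_of_double_cross_flip {V : Type*} (G : SimpleGraph V) (n : ℕ) (hn : 3 ≤ n)
    (v : ℕ → V)
    (hinj : ∀ i j, i < n → j < n → v i = v j → i = j)
    (hpath : ∀ i, i + 1 < n → G.Adj (v i) (v (i + 1)))
    (i j : ℕ) (hji : j < i) (hi : i ≤ n - 2)
    (h1 : G.Adj (v i) (v 0))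
    (h2 : G.Adj (v j) (v (n - 1)))
    (h3 : G.Adj (v (i + 1)) (v (j + 1))) :
    ∃ (a : V) (c : G.Walk a a), c.IsCycle ∧
      (∀ x, x ∈ c.support ↔ ∃ k < n, v k = x) := by
  obtain ⟨p, hp⟩ := exists_walk_support_eq_map_Ico (v := v) (Nat.zero_le j)
    fun k _ hk ↦ hpath k (by omega)
  obtain ⟨q, hq⟩ := exists_walk_support_eq_map_Ico (v := v) (show j + 1 ≤ i from hji)
    fun k _ hk ↦ hpath k (by omega)
  obtain ⟨r, hr⟩ := exists_walk_support_eq_map_Ico (v := v) (show i + 1 ≤ n - 1 by omega)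
    fun k _ hk ↦ hpath k (by omega)
  have hsupp : p.support ++ q.support ++ r.support = (List.Ico 0 n).map v := by
    rw [hp, hq, hr, ← List.map_append, ← List.map_append,
      List.Ico.append_consecutive (by omega) (by omega),
      List.Ico.append_consecutive (by omega) (by omega), Nat.sub_add_cancel (by omega)]
  have hnodup : ((List.Ico 0 n).map v).Nodup :=
    (List.Ico.nodup 0 n).map_on fun k hk l hl ↦
      hinj k l (List.Ico.mem.mp hk).2 (List.Ico.mem.mp hl).2
  obtain ⟨c, hc, hmem⟩ := exists_isCycle_of_nodup_support_append p q r (hsupp ▸ hnodup) h2 h3 h1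
  exact ⟨v i, c, hc, fun x ↦ by simp [hmem, hsupp]⟩
end
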